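/- Let q > 2 and λ, Λ, M > 0. There is a radius R = R(λ, Λ, M, n, q) > 0 such that for every embedded, regular C¹ curve u : ℝ/ℤ → ℝⁿ with [u']_{W^{1-1/q,q}} < ∞, λ ≤ |u'| ≤ Λ, and TP(u) ≤ M, and every C¹ curve ũ : ℝ/ℤ → ℝⁿ with ‖(ũ − u)'‖_{L^∞} ≤ R, one has bil(ũ) ≤ 2 bil(u) < ∞. -/

import Mathlib

open MeasureTheory Set Filter
open scoped RealInnerProductSpace ENNReal Topology

noncomputable section

/-- The distance on the circle `ℝ/ℤ` between the points represented by `x` and `y`. -/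
def circDist (x y : ℝ) : ℝ := ‖((x - y : ℝ) : AddCircle (1 : ℝ))‖

/-- The representative of `z` modulo `1` lying in `(-1/2, 1/2]`. -/
def wrap (z : ℝ) : ℝ := 1 / 2 - Int.fract (1 / 2 - z)

/-- Squared wedge norm `|a ∧ b|² = |a|²|b|² - ⟨a,b⟩²`. -/
def wedgeSq {n : ℕ} (a b : EuclideanSpace ℝ (Fin n)) : ℝ :=
  ‖a‖ ^ 2 * ‖b‖ ^ 2 - ⟪a, b⟫ ^ 2

/-- Wedge inner product `⟨a∧b, c∧d⟩ = ⟨a,c⟩⟨b,d⟩ - ⟨a,d⟩⟨b,c⟩`. -/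
def wedgeInner {n : ℕ} (a b c d : EuclideanSpace ℝ (Fin n)) : ℝ :=
  ⟪a, c⟫ * ⟪b, d⟫ - ⟪a, d⟫ * ⟪b, c⟫

/-- Fundamental domain for double integrals over `(ℝ/ℤ)²`. -/
def unitSq : Set (ℝ × ℝ) := Ioc (0 : ℝ) 1 ×ˢ Ioc (0 : ℝ) 1

/-- The tangent-point functional `TP` (extended-real-valued). -/
def TPe {n : ℕ} (q : ℝ) (u : ℝ → EuclideanSpace ℝ (Fin n)) : ℝ≥0∞ :=
  ENNReal.ofReal (1 / q) *
    ∫⁻ p in unitSq, ENNReal.ofReal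
      (wedgeSq (deriv u p.2) (u p.1 - u p.2) ^ (q / 2) / ‖u p.1 - u p.2‖ ^ (2 * q))

/-- The tangent-point functional `TP` (real-valued). -/
def TPr {n : ℕ} (q : ℝ) (u : ℝ → EuclideanSpace ℝ (Fin n)) : ℝ := (TPe q u).toReal

/-- The `q`-th power of the Sobolev–Slobodeckii seminorm `[f]_{W^{s,q}}` on `ℝ/ℤ`. -/
def sobSemPow {n : ℕ} (s q : ℝ) (f : ℝ → EuclideanSpace ℝ (Fin n)) : ℝ≥0∞ :=
  ∫⁻ p in unitSq, ENNReal.ofReal (‖f p.1 - f p.2‖ ^ q / circDist p.1 p.2 ^ (1 + s * q))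

/-- The `W^{s,q}`-norm `‖f‖_{L^q} + [f]_{W^{s,q}}`. -/
def Wnorm {n : ℕ} (s q : ℝ) (f : ℝ → EuclideanSpace ℝ (Fin n)) : ℝ :=
  (∫ x in Ioc (0 : ℝ) 1, ‖f x‖ ^ q) ^ (1 / q) + (sobSemPow s q f).toReal ^ (1 / q)

/-- The bi-Lipschitz constant `bil(u) = sup_{x ≢ y} |x-y|_{ℝ/ℤ}/|u(x)-u(y)|`. -/
def bil {n : ℕ} (u : ℝ → EuclideanSpace ℝ (Fin n)) : ℝ≥0∞ :=
  ⨆ (x : ℝ) (y : ℝ) (_ : circDist x y ≠ 0),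
    ENNReal.ofReal (circDist x y) / ENNReal.ofReal ‖u x - u y‖

/-- The `L^∞`-norm of the derivative of `u`. -/
def linfD {n : ℕ} (u : ℝ → EuclideanSpace ℝ (Fin n)) : ℝ≥0∞ :=
  ⨆ x : ℝ, (‖deriv u x‖₊ : ℝ≥0∞)

/-- A periodic curve is embedded if it is injective on the circle `ℝ/ℤ`. -/
def Embedded {n : ℕ} (u : ℝ → EuclideanSpace ℝ (Fin n)) : Prop :=
  ∀ x y : ℝ, u x = u y → ((x : AddCircle (1 : ℝ)) = (y : AddCircle (1 : ℝ)))

/-- A curve is regular if `min_{ℝ/ℤ} |u'| > 0`. -/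
def Regular {n : ℕ} (u : ℝ → EuclideanSpace ℝ (Fin n)) : Prop :=
  0 < ⨅ x : ℝ, ‖deriv u x‖

/-- Orthogonal projection of `b` onto the orthogonal complement of `ℝ a`. -/
def projPerp {n : ℕ} (a b : EuclideanSpace ℝ (Fin n)) : EuclideanSpace ℝ (Fin n) :=
  b - (⟪b, a⟫ / ‖a‖ ^ 2) • a

/-- The classical tangent-point functional (extended-real-valued). -/
def TPcle {n : ℕ} (q : ℝ) (u : ℝ → EuclideanSpace ℝ (Fin n)) : ℝ≥0∞ :=
  ENNReal.ofReal (1 / q) *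
    ∫⁻ p in unitSq, ENNReal.ofReal
      (‖projPerp (deriv u p.2) (u p.1 - u p.2)‖ ^ q / ‖u p.1 - u p.2‖ ^ (2 * q) *
        (‖deriv u p.1‖ * ‖deriv u p.2‖))

/-- The integrand of the functional `M(u; v, w)`. -/
def Mintegrand {n : ℕ} (q : ℝ) (u v w : ℝ → EuclideanSpace ℝ (Fin n)) (p : ℝ × ℝ) : ℝ :=
  wedgeSq (deriv u p.2) (u p.1 - u p.2) ^ ((q - 2) / 2) / ‖u p.1 - u p.2‖ ^ (2 * q) *
    wedgeInner (deriv u p.2) (u p.1 - u p.2) (deriv v p.2)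
      (w p.1 - w p.2 - wrap (p.1 - p.2) • deriv w p.2)

/-- The functional `M(u; v, w)` appearing in the first variation of `TP`. -/
def Mfun {n : ℕ} (q : ℝ) (u v w : ℝ → EuclideanSpace ℝ (Fin n)) : ℝ :=
  ∫ p in unitSq, Mintegrand q u v w p

/-- The integrand of the functional `A(u; v, w)`. -/
def Aintegrand {n : ℕ} (q : ℝ) (u v w : ℝ → EuclideanSpace ℝ (Fin n)) (p : ℝ × ℝ) : ℝ :=
  wedgeSq (deriv u p.2) (u p.1 - u p.2) ^ (q / 2) / ‖u p.1 - u p.2‖ ^ (2 * q + 2) *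
    ⟪v p.1 - v p.2, w p.1 - w p.2⟫

/-- The functional `A(u; v, w)` appearing in the first variation of `TP`. -/
def Afun {n : ℕ} (q : ℝ) (u v w : ℝ → EuclideanSpace ℝ (Fin n)) : ℝ :=
  ∫ p in unitSq, Aintegrand q u v w p

/-- The first variation `δTP(u)[w] = M(u;u,w) + M(u;w,u) - 2A(u;u,w)`. -/
def deltaTP {n : ℕ} (q : ℝ) (u w : ℝ → EuclideanSpace ℝ (Fin n)) : ℝ :=
  Mfun q u u w + Mfun q u w u - 2 * Afun q u u w

/-- The `H²` inner product on periodic curves. -/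
def H2inner (v w : ℝ → EuclideanSpace ℝ (Fin 3)) : ℝ :=
  ∫ x in Ioc (0 : ℝ) 1,
    (⟪v x, w x⟫ + ⟪deriv v x, deriv w x⟫ + ⟪deriv (deriv v) x, deriv (deriv w) x⟫)

/-- The total energy `E(u) = (κ/2)∫|u''|² + ρ TP(u)`. -/
def energyE (κ ρ q : ℝ) (u : ℝ → EuclideanSpace ℝ (Fin 3)) : ℝ :=
  κ / 2 * (∫ x in Ioc (0 : ℝ) 1, ‖deriv (deriv u) x‖ ^ 2) + ρ * TPr q u

theorem wedgeSq_nonneg {n : ℕ} (a b : EuclideanSpace ℝ (Fin n)) : 0 ≤ wedgeSq a b := by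
  have h := pow_le_pow_left₀ (abs_nonneg _) (abs_real_inner_le_norm a b) 2
  rw [sq_abs, mul_pow] at h
  exact sub_nonneg.2 h

theorem abs_sq_inner_div_sub_le {n : ℕ} {a w e : EuclideanSpace ℝ (Fin n)} (ha : a ≠ 0)
    (hw : w ≠ 0) (he : ‖e‖ = 1) :
    |⟪a, e⟫ ^ 2 / ‖a‖ ^ 2 - ⟪w, e⟫ ^ 2 / ‖w‖ ^ 2| ≤ 2 * √(wedgeSq a w) / (‖a‖ * ‖w‖) := by
  have ha' : 0 < ‖a‖ := norm_pos_iff.2 ha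
  have hw' : 0 < ‖w‖ := norm_pos_iff.2 hw
  set x : EuclideanSpace ℝ (Fin n) := ‖w‖ • a - ‖a‖ • w
  set y : EuclideanSpace ℝ (Fin n) := ‖w‖ • a + ‖a‖ • w
  have hx : ‖x‖ ^ 2 = 2 * (‖a‖ ^ 2 * ‖w‖ ^ 2) - 2 * (‖a‖ * ‖w‖) * ⟪a, w⟫ := by
    rw [norm_sub_sq_real, norm_smul, norm_smul, real_inner_smul_left, real_inner_smul_right]
    simp only [norm_norm]; ring
  have hy : ‖y‖ ^ 2 = 2 * (‖a‖ ^ 2 * ‖w‖ ^ 2) + 2 * (‖a‖ * ‖w‖) * ⟪a, w⟫ := by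
    rw [norm_add_sq_real, norm_smul, norm_smul, real_inner_smul_left, real_inner_smul_right]
    simp only [norm_norm]; ring
  have hxy : ‖x‖ * ‖y‖ = 2 * (‖a‖ * ‖w‖) * √(wedgeSq a w) := by
    refine (sq_eq_sq₀ (by positivity) (by positivity)).1 ?_
    rw [mul_pow, hx, hy, mul_pow, Real.sq_sqrt (wedgeSq_nonneg a w), wedgeSq]; ring
  have hprod : |⟪x, e⟫ * ⟪y, e⟫| ≤ ‖x‖ * ‖y‖ := by
    rw [abs_mul]
    have h1 := abs_real_inner_le_norm x e
    have h2 := abs_real_inner_le_norm y e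
    rw [he, mul_one] at h1 h2
    gcongr
  have hxe : ⟪x, e⟫ = ‖w‖ * ⟪a, e⟫ - ‖a‖ * ⟪w, e⟫ := by
    rw [inner_sub_left, real_inner_smul_left, real_inner_smul_left]
  have hye : ⟪y, e⟫ = ‖w‖ * ⟪a, e⟫ + ‖a‖ * ⟪w, e⟫ := by
    rw [inner_add_left, real_inner_smul_left, real_inner_smul_left]
  have hid : ⟪a, e⟫ ^ 2 / ‖a‖ ^ 2 - ⟪w, e⟫ ^ 2 / ‖w‖ ^ 2 =
      ⟪x, e⟫ * ⟪y, e⟫ / (‖a‖ * ‖w‖) ^ 2 := by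
    rw [hxe, hye]; field_simp; ring
  rw [hid, abs_div, abs_of_pos (by positivity : (0 : ℝ) < (‖a‖ * ‖w‖) ^ 2),
    div_le_div_iff₀ (by positivity) (by positivity)]
  calc _ ≤ ‖x‖ * ‖y‖ * (‖a‖ * ‖w‖) := by gcongr
    _ = _ := by rw [hxy]; ring

theorem le_add_rpow_mul_rpow {q K f : ℝ} (hq : 1 ≤ q) (hK : 0 < K) (hf : 0 ≤ f) :
    f ≤ K + K ^ (1 - q) * f ^ q := by
  rcases le_or_gt f K with h | h
  · have : 0 ≤ K ^ (1 - q) * f ^ q := by positivity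
    linarith
  · have hf' : 0 < f := hK.trans h
    have h1 : f ^ (1 - q) ≤ K ^ (1 - q) := Real.rpow_le_rpow_of_nonpos hK h.le (by linarith)
    have h2 : f = f ^ (1 - q) * f ^ q := by
      rw [← Real.rpow_add hf']; simp
    have : f ^ (1 - q) * f ^ q ≤ K ^ (1 - q) * f ^ q := by gcongr
    linarith

theorem abs_sub_le_of_adjacent_integral_le {p : ℝ → ℝ} (hp : Continuous p) {D α : ℝ}
    (hD : 0 ≤ D) (hα : 0 < α)
    (h : ∀ c k : ℝ, 0 ≤ c → 0 < k → c + 2 * k ≤ 1 →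
      |(∫ x in c..c + k, p x) - ∫ x in c + k..c + 2 * k, p x| ≤ D * k ^ (1 + α))
    {a b : ℝ} (ha : 0 ≤ a) (hab : a < b) (hb : b ≤ 1) :
    |p a - p b| ≤ 2 * (D / (1 - 2⁻¹ ^ α)) * (b - a) ^ α := by
  set F : ℝ → ℝ := fun x => ∫ t in (0 : ℝ)..x, p t with hF
  have hint : ∀ x y, IntervalIntegrable p volume x y := fun x y => hp.intervalIntegrable x y
  have hF' : ∀ x, HasDerivAt F (p x) x := fun x => hp.integral_hasStrictDerivAt 0 x |>.hasDerivAt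
  have hsub : ∀ x y, ∫ t in x..y, p t = F y - F x := fun x y =>
    (intervalIntegral.integral_interval_sub_left (hint _ _) (hint _ _)).symm
  have h2 : (2⁻¹ : ℝ) ^ α < 1 := Real.rpow_lt_one (by norm_num) (by norm_num) hα
  set A : ℝ := D / (1 - 2⁻¹ ^ α) with hA
  have hA0 : 0 ≤ A := div_nonneg hD (by linarith)
  have hAD : A - A * 2⁻¹ ^ α = D := by
    rw [hA]; field_simp [show (1 : ℝ) - 2⁻¹ ^ α ≠ 0 by linarith]
  have hstep : ∀ t l : ℝ, l ≠ 0 → 0 ≤ t → t ≤ 1 → 0 ≤ t + l → t + l ≤ 1 →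
      |(F (t + l) - F t) / l - (F (t + l / 2) - F t) / (l / 2)| ≤ D * |l| ^ α := by
    intro t l hl ht ht' htl htl'
    have key : |2 * F (t + l / 2) - F t - F (t + l)| ≤ D * (|l| / 2) ^ (1 + α) := by
      rcases lt_or_gt_of_ne hl with h0 | h0
      · have := h (t + l) (-l / 2) htl (by linarith) (by linarith)
        rw [hsub, hsub] at this
        rw [abs_of_neg h0]
        convert this using 2
        rw [show t + l + -l / 2 = t + l / 2 by ring, show t + l + 2 * (-l / 2) = t by ring]; ring
      · have := h t (l / 2) ht (by linarith) (by linarith)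
        rw [hsub, hsub] at this
        rw [abs_of_pos h0]
        convert this using 2
        rw [show t + 2 * (l / 2) = t + l by ring]; ring
    have hid : (F (t + l) - F t) / l - (F (t + l / 2) - F t) / (l / 2)
        = -(2 * F (t + l / 2) - F t - F (t + l)) / l := by
      field_simp; ring
    have hl' : 0 < |l| := abs_pos.2 hl
    rw [hid, abs_div, abs_neg, div_le_iff₀ hl']
    refine key.trans ?_
    rw [mul_assoc, ← Real.rpow_add_one hl'.ne', add_comm 1 α]
    have : |l| / 2 ≤ |l| := by linarith
    gcongr
  have hmean : ∀ t l : ℝ, l ≠ 0 → 0 ≤ t → t ≤ 1 → 0 ≤ t + l → t + l ≤ 1 →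
      |(F (t + l) - F t) / l - p t| ≤ A * |l| ^ α := by
    intro t l hl ht ht' htl htl'
    have hind : ∀ m : ℕ, |(F (t + l) - F t) / l - p t| - A * |l| ^ α ≤
        |(F (t + l / 2 ^ m) - F t) / (l / 2 ^ m) - p t| := by
      suffices ∀ m : ℕ, |(F (t + l) - F t) / l - p t| - A * |l| ^ α ≤
        |(F (t + l / 2 ^ m) - F t) / (l / 2 ^ m) - p t| - A * |l / 2 ^ m| ^ α from fun m =>
          (this m).trans (by have : 0 ≤ A * |l / 2 ^ m| ^ α := by positivity
                             linarith)
      intro m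
      induction m with
      | zero => simp
      | succ m ih =>
        refine ih.trans ?_
        set l' := l / 2 ^ m with hl'
        have hl1 : l / 2 ^ (m + 1) = l' / 2 := by rw [hl', pow_succ]; field_simp
        have hc1 : (1 : ℝ) ≤ 2 ^ m := one_le_pow₀ (by norm_num)
        have hc : 0 < (1 / 2 ^ m : ℝ) ∧ (1 / 2 ^ m : ℝ) ≤ 1 :=
          ⟨by positivity, by rw [div_le_one (by positivity)]; exact hc1⟩
        have hl2 : l' = l * (1 / 2 ^ m) := by rw [hl']; ring
        have hs := hstep t l' (by rw [hl2]; exact mul_ne_zero hl hc.1.ne') ht ht'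
          (by rw [hl2]; nlinarith) (by rw [hl2]; nlinarith)
        rw [hl1]
        have habs : |l' / 2| ^ α = |l'| ^ α * 2⁻¹ ^ α := by
          rw [abs_div, div_eq_mul_inv, Real.mul_rpow (abs_nonneg _) (by positivity)]; norm_num
        rw [habs]
        have htri := abs_sub_le ((F (t + l') - F t) / l') ((F (t + l' / 2) - F t) / (l' / 2)) (p t)
        rw [← hAD] at hs
        nlinarith
    have hlim : Tendsto (fun m : ℕ => |(F (t + l / 2 ^ m) - F t) / (l / 2 ^ m) - p t|) atTop
        (𝓝 0) := by
      have hs : Tendsto (fun m : ℕ => l / (2 : ℝ) ^ m) atTop (𝓝[≠] 0) := by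
        rw [tendsto_nhdsWithin_iff]
        refine ⟨?_, Eventually.of_forall fun m => div_ne_zero hl (by positivity)⟩
        have := (tendsto_pow_atTop_nhds_zero_of_lt_one (r := (2⁻¹ : ℝ)) (by norm_num)
          (by norm_num)).const_mul l
        simpa [div_eq_mul_inv] using this
      have := (hasDerivAt_iff_tendsto_slope_zero.1 (hF' t)).comp hs
      have := (this.sub_const (p t)).abs
      simpa [div_eq_inv_mul, Function.comp_def] using this
    have := ge_of_tendsto' hlim hind
    linarith
  have h1 := hmean a (b - a) (by linarith) ha (by linarith) (by linarith) (by linarith)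
  have h3 := hmean b (a - b) (by linarith) (by linarith) hb (by linarith) (by linarith)
  rw [abs_sub_comm a b, abs_of_pos (sub_pos.2 hab)] at h3
  rw [abs_of_pos (sub_pos.2 hab)] at h1
  have hid : (F (b + (a - b)) - F b) / (a - b) = (F (a + (b - a)) - F a) / (b - a) := by
    rw [show b + (a - b) = a by ring, show a + (b - a) = b by ring, ← neg_sub (F b), ← neg_sub b,
      neg_div_neg_eq]
  rw [hid] at h3
  rw [abs_sub_comm] at h1
  have := abs_sub_le (p a) ((F (a + (b - a)) - F a) / (b - a)) (p b)
  linarith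

theorem adjacent_integral_le {p : ℝ → ℝ} (hp : Continuous p) {g : ℝ × ℝ → ℝ} (hgm : Measurable g)
    (hg0 : ∀ z, 0 ≤ g z) {q L B : ℝ} (hq : 1 ≤ q) (hL : 0 ≤ L) (hB : 0 ≤ B)
    (hg : ∀ s ∈ Ioc (0 : ℝ) 1, ∀ t ∈ Ioc (0 : ℝ) 1, s ≠ t →
      |p s - p t| ≤ L * |s - t| * (g (s, t) + g (t, s)))
    (hgB : ∫⁻ z in unitSq, ENNReal.ofReal (g z ^ q) ≤ ENNReal.ofReal B)
    {c k : ℝ} (hc : 0 ≤ c) (hk : 0 < k) (hck : c + 2 * k ≤ 1) :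
    |(∫ x in c..c + k, p x) - ∫ x in c + k..c + 2 * k, p x| ≤
      4 * L * (1 + B) * k ^ (1 + (1 - 2 / q)) := by
  have hq0 : 0 < q := by linarith
  set I := Ioc c (c + k) with hI
  set J := Ioc (c + k) (c + 2 * k) with hJ
  set K : ℝ := k ^ (-(2 / q)) with hKdef
  have hK : 0 < K := by positivity
  have hIs : I ⊆ Ioc 0 1 := fun x hx => ⟨hc.trans_lt hx.1, by linarith [hx.2]⟩
  have hJs : J ⊆ Ioc 0 1 := fun x hx => ⟨by linarith [hx.1], by linarith [hx.2]⟩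
  have hIv : volume I = ENNReal.ofReal k := by rw [hI, Real.volume_Ioc]; ring_nf
  have hJv : volume J = ENNReal.ofReal k := by rw [hJ, Real.volume_Ioc]; ring_nf
  have hIJm : MeasurableSet (I ×ˢ J) := measurableSet_Ioc.prod measurableSet_Ioc
  have hIJv : (volume : Measure (ℝ × ℝ)) (I ×ˢ J) = ENNReal.ofReal (k * k) := by
    rw [Measure.volume_eq_prod, Measure.prod_prod, hIv, hJv, ENNReal.ofReal_mul hk.le]
  have hpI : Integrable p (volume.restrict I) := (hp.integrableOn_Icc).mono_set Ioc_subset_Icc_self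
  have hpJ : Integrable p (volume.restrict J) := (hp.integrableOn_Icc).mono_set Ioc_subset_Icc_self
  have hFub : ∫ z in I ×ˢ J, (p z.1 - p z.2) =
      k * ((∫ x in c..c + k, p x) - ∫ x in c + k..c + 2 * k, p x) := by
    have h1 : Integrable (fun z : ℝ × ℝ => p z.1)
        ((volume.restrict I).prod (volume.restrict J)) := hpI.comp_fst _
    have h2 : Integrable (fun z : ℝ × ℝ => p z.2)
        ((volume.restrict I).prod (volume.restrict J)) := hpJ.comp_snd _
    rw [Measure.volume_eq_prod, ← Measure.prod_restrict, integral_sub h1 h2,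
      integral_fun_fst, integral_fun_snd,
      intervalIntegral.integral_of_le (by linarith), intervalIntegral.integral_of_le (by linarith)]
    simp only [Measure.real, Measure.restrict_apply_univ, hIv, hJv, ENNReal.toReal_ofReal hk.le,
      smul_eq_mul]
    ring
  set G : ℝ × ℝ → ℝ≥0∞ := fun z => ENNReal.ofReal (g z ^ q) with hG
  have hGm : Measurable G := (hgm.pow_const q).ennreal_ofReal
  have hb1 : ∫⁻ z in I ×ˢ J, G z ≤ ENNReal.ofReal B :=
    (lintegral_mono_set (prod_mono hIs hJs)).trans hgB
  have hb2 : ∫⁻ z in I ×ˢ J, G z.swap ≤ ENNReal.ofReal B := by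
    have hmp : MeasurePreserving (Prod.swap : ℝ × ℝ → ℝ × ℝ) volume volume :=
      Measure.measurePreserving_swap
    have := hmp.setLIntegral_comp_preimage (s := J ×ˢ I)
      (measurableSet_Ioc.prod measurableSet_Ioc) hGm
    rw [preimage_swap_prod] at this
    rw [this]
    exact (lintegral_mono_set (prod_mono hJs hIs)).trans hgB
  have hpt : ∀ z ∈ I ×ˢ J, ‖p z.1 - p z.2‖ₑ ≤
      ENNReal.ofReal (2 * L * k) * (ENNReal.ofReal (2 * K) +
        ENNReal.ofReal (K ^ (1 - q)) * (G z + G z.swap)) := by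
    rintro ⟨s, t⟩ ⟨hs, ht⟩
    have hst : s < t := lt_of_le_of_lt hs.2 ht.1
    have h1 := hg s (hIs hs) t (hJs ht) hst.ne
    have h2 : |s - t| ≤ 2 * k := by
      rw [abs_le]; constructor <;> linarith [hs.1, hs.2, ht.1, ht.2]
    have h3 := le_add_rpow_mul_rpow hq hK (hg0 (s, t))
    have h4 := le_add_rpow_mul_rpow hq hK (hg0 (t, s))
    have e1 : 0 ≤ g (s, t) ^ q := Real.rpow_nonneg (hg0 _) _
    have e2 : 0 ≤ g (t, s) ^ q := Real.rpow_nonneg (hg0 _) _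
    have h5 : |p s - p t| ≤
        2 * L * k * (2 * K + K ^ (1 - q) * (g (s, t) ^ q + g (t, s) ^ q)) := by
      have e3 := hg0 (s, t)
      have e4 := hg0 (t, s)
      calc _ ≤ L * |s - t| * (g (s, t) + g (t, s)) := h1
        _ ≤ L * (2 * k) * (2 * K + K ^ (1 - q) * (g (s, t) ^ q + g (t, s) ^ q)) := by
          have e5 : g (s, t) + g (t, s) ≤ 2 * K + K ^ (1 - q) * (g (s, t) ^ q + g (t, s) ^ q) := by
            linarith
          exact mul_le_mul (by gcongr) e5 (by positivity) (by positivity)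
        _ = _ := by ring
    rw [Real.enorm_eq_ofReal_abs]
    refine (ENNReal.ofReal_le_ofReal h5).trans (le_of_eq ?_)
    rw [ENNReal.ofReal_mul (p := 2 * L * k) (by positivity),
      ENNReal.ofReal_add (by positivity) (by positivity),
      ENNReal.ofReal_mul (p := K ^ (1 - q)) (by positivity), ENNReal.ofReal_add e1 e2]
    rfl
  have hbound : ENNReal.ofReal |∫ z in I ×ˢ J, (p z.1 - p z.2)| ≤
      ENNReal.ofReal (2 * L * k * (2 * K * (k * k) + K ^ (1 - q) * (B + B))) := by
    rw [← Real.enorm_eq_ofReal_abs]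
    calc _ ≤ ∫⁻ z in I ×ˢ J, ‖p z.1 - p z.2‖ₑ := enorm_integral_le_lintegral_enorm _
      _ ≤ ∫⁻ z in I ×ˢ J, ENNReal.ofReal (2 * L * k) * (ENNReal.ofReal (2 * K) +
          ENNReal.ofReal (K ^ (1 - q)) * (G z + G z.swap)) := setLIntegral_mono' hIJm hpt
      _ = ENNReal.ofReal (2 * L * k) * (ENNReal.ofReal (2 * K) * ENNReal.ofReal (k * k) +
          ENNReal.ofReal (K ^ (1 - q)) * ((∫⁻ z in I ×ˢ J, G z) + ∫⁻ z in I ×ˢ J, G z.swap)) := by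
        rw [lintegral_const_mul' _ _ ENNReal.ofReal_ne_top, lintegral_add_left measurable_const,
          lintegral_const_mul' _ _ ENNReal.ofReal_ne_top, lintegral_add_left hGm, setLIntegral_const,
          hIJv]
      _ ≤ ENNReal.ofReal (2 * L * k) * (ENNReal.ofReal (2 * K) * ENNReal.ofReal (k * k) +
          ENNReal.ofReal (K ^ (1 - q)) * (ENNReal.ofReal B + ENNReal.ofReal B)) := by gcongr
      _ = _ := by
        rw [← ENNReal.ofReal_add hB hB, ← ENNReal.ofReal_mul (by positivity),
          ← ENNReal.ofReal_mul (by positivity), ← ENNReal.ofReal_add (by positivity) (by positivity),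
          ← ENNReal.ofReal_mul (by positivity)]
  rw [ENNReal.ofReal_le_ofReal_iff (by positivity), hFub, abs_mul, abs_of_pos hk] at hbound
  have e1 : K * (k * k) = k ^ (1 + (1 - 2 / q)) := by
    rw [hKdef, show k * k = k ^ (2 : ℝ) by rw [Real.rpow_two]; ring, ← Real.rpow_add hk]
    ring_nf
  have e2 : K ^ (1 - q) = k ^ (1 + (1 - 2 / q)) := by
    rw [hKdef, ← Real.rpow_mul hk.le]
    congr 1; field_simp; ring
  rw [mul_assoc 2 K, e1, e2] at hbound
  refine le_of_mul_le_mul_left (hbound.trans (le_of_eq ?_)) hk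
  ring

theorem abs_sub_le_of_lintegral_le {p : ℝ → ℝ} (hp : Continuous p) {g : ℝ × ℝ → ℝ}
    (hgm : Measurable g)
    (hg0 : ∀ z, 0 ≤ g z) {q L B : ℝ} (hq : 2 < q) (hL : 0 ≤ L) (hB : 0 ≤ B)
    (hper : Function.Periodic p 1)
    (hg : ∀ s ∈ Ioc (0 : ℝ) 1, ∀ t ∈ Ioc (0 : ℝ) 1, s ≠ t →
      |p s - p t| ≤ L * |s - t| * (g (s, t) + g (t, s)))
    (hgB : ∫⁻ z in unitSq, ENNReal.ofReal (g z ^ q) ≤ ENNReal.ofReal B)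
    {x y : ℝ} (hxy : |x - y| ≤ 1) :
    |p x - p y| ≤
      4 * (4 * L * (1 + B) / (1 - 2⁻¹ ^ (1 - 2 / q))) * |x - y| ^ (1 - 2 / q) := by
  have hα : 0 < 1 - 2 / q := by rw [sub_pos, div_lt_one (by linarith)]; exact hq
  set α := 1 - 2 / q
  have h2 : (2⁻¹ : ℝ) ^ α < 1 := Real.rpow_lt_one (by norm_num) (by norm_num) hα
  set A := 4 * L * (1 + B) / (1 - 2⁻¹ ^ α) with hA
  have hA0 : 0 ≤ A := div_nonneg (by positivity) (by linarith)
  have hbase : ∀ a b : ℝ, 0 ≤ a → a ≤ b → b ≤ 1 → |p a - p b| ≤ 2 * A * (b - a) ^ α := by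
    intro a b ha hab hb
    rcases hab.eq_or_lt with rfl | hab
    · simp [Real.zero_rpow hα.ne']
    · exact abs_sub_le_of_adjacent_integral_le hp (by positivity) hα
        (fun c k hc hk hck => adjacent_integral_le hp hgm hg0 (by linarith) hL hB hg hgB hc hk hck)
        ha hab hb
  have hshift : ∀ (m : ℤ) (a b : ℝ), (m : ℝ) ≤ a → a ≤ b → b ≤ m + 1 →
      |p a - p b| ≤ 2 * A * (b - a) ^ α := by
    intro m a b ha hab hb
    have := hbase (a - m) (b - m) (by linarith) (by linarith) (by linarith)
    have hs : ∀ z, p (z - m) = p z := fun z => by simpa using hper.sub_int_mul_eq (x := z) m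
    rwa [hs, hs, sub_sub_sub_cancel_right] at this
  wlog hle : x ≤ y generalizing x y
  · rw [abs_sub_comm, abs_sub_comm x]
    exact this (by rwa [abs_sub_comm]) (le_of_not_ge hle)
  rw [abs_sub_comm x y, abs_of_nonneg (sub_nonneg.2 hle)] at hxy ⊢
  have hf1 := Int.floor_le x
  have hf2 := Int.lt_floor_add_one x
  rcases le_or_gt y (⌊x⌋ + 1) with hy | hy
  · have := hshift ⌊x⌋ x y hf1 hle hy
    have h0 : 0 ≤ A * (y - x) ^ α := mul_nonneg hA0 (Real.rpow_nonneg (by linarith) _)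
    linarith
  · have h1 := hshift ⌊x⌋ x (⌊x⌋ + 1) hf1 hf2.le le_rfl
    have h3 := hshift (⌊x⌋ + 1) (⌊x⌋ + 1) y (by push_cast; rfl) hy.le (by push_cast; linarith)
    have m1 : ((⌊x⌋ : ℝ) + 1 - x) ^ α ≤ (y - x) ^ α :=
      Real.rpow_le_rpow (by linarith) (by linarith) hα.le
    have m2 : (y - ((⌊x⌋ : ℝ) + 1)) ^ α ≤ (y - x) ^ α :=
      Real.rpow_le_rpow (by linarith) (by linarith) hα.le
    have htri := abs_sub_le (p x) (p (⌊x⌋ + 1)) (p y)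
    have := mul_le_mul_of_nonneg_left m1 hA0
    have := mul_le_mul_of_nonneg_left m2 hA0
    linarith

theorem circDist_le {x y : ℝ} (m : ℤ) : circDist x y ≤ |x - y - m| := by
  rw [circDist, UnitAddCircle.norm_eq]
  exact round_le _ _

theorem exists_int_abs_sub_eq_circDist (x y : ℝ) : ∃ m : ℤ, |x - (y + m)| = circDist x y :=
  ⟨round (x - y), by rw [circDist, UnitAddCircle.norm_eq]; congr 1; ring⟩

theorem circDist_le_half (x y : ℝ) : circDist x y ≤ 1 / 2 := by
  rw [circDist, UnitAddCircle.norm_eq]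
  exact abs_sub_round _

theorem Embedded.exists_int {n : ℕ} {u : ℝ → EuclideanSpace ℝ (Fin n)} (hu : Embedded u) {x y : ℝ}
    (h : u x = u y) : ∃ m : ℤ, x - y = m := by
  have h1 : ((x - y : ℝ) : AddCircle (1 : ℝ)) = 0 := by
    rw [AddCircle.coe_sub, hu x y h, sub_self]
  obtain ⟨m, hm⟩ := (AddCircle.coe_eq_zero_iff (1 : ℝ)).1 h1
  exact ⟨m, by simpa using hm.symm⟩

/-- The `q`-th root of the integrand of the tangent-point functional. -/
def tpRatio {n : ℕ} (u : ℝ → EuclideanSpace ℝ (Fin n)) (z : ℝ × ℝ) : ℝ :=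
  √(wedgeSq (deriv u z.2) (u z.1 - u z.2)) / ‖u z.1 - u z.2‖ ^ 2

theorem tpRatio_nonneg {n : ℕ} (u : ℝ → EuclideanSpace ℝ (Fin n)) (z : ℝ × ℝ) :
    0 ≤ tpRatio u z := by
  unfold tpRatio; positivity

theorem tpRatio_rpow {n : ℕ} (u : ℝ → EuclideanSpace ℝ (Fin n)) (q : ℝ) (z : ℝ × ℝ) :
    tpRatio u z ^ q =
      wedgeSq (deriv u z.2) (u z.1 - u z.2) ^ (q / 2) / ‖u z.1 - u z.2‖ ^ (2 * q) := by
  rw [tpRatio, Real.div_rpow (Real.sqrt_nonneg _) (by positivity), Real.sqrt_eq_rpow,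
    ← Real.rpow_mul (wedgeSq_nonneg _ _), Real.rpow_mul (norm_nonneg _), Real.rpow_two]
  congr 2; ring

/-- A periodic embedded `C¹` curve with `lam ≤ |u'| ≤ Λ` and `q TP(u) ≤ B`. -/
structure IsTPCurve {n : ℕ} (q lam Λ B : ℝ) (u : ℝ → EuclideanSpace ℝ (Fin n)) : Prop where
  contDiff : ContDiff ℝ 1 u
  periodic : Function.Periodic u 1
  embedded : Embedded u
  le_norm_deriv : ∀ x, lam ≤ ‖deriv u x‖
  norm_deriv_le : ∀ x, ‖deriv u x‖ ≤ Λ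
  lintegral_le : ∫⁻ z in unitSq, ENNReal.ofReal (tpRatio u z ^ q) ≤ ENNReal.ofReal B

theorem lintegral_tpRatio_le {n : ℕ} {u : ℝ → EuclideanSpace ℝ (Fin n)} {q M : ℝ} (hq : 0 < q)
    (h : TPe q u ≤ ENNReal.ofReal M) :
    ∫⁻ z in unitSq, ENNReal.ofReal (tpRatio u z ^ q) ≤ ENNReal.ofReal (q * M) := by
  simp only [tpRatio_rpow]
  have h1 := mul_le_mul_right h (ENNReal.ofReal q)
  rwa [TPe, ← mul_assoc, ← ENNReal.ofReal_mul hq.le, ← ENNReal.ofReal_mul hq.le,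
    mul_one_div_cancel hq.ne', ENNReal.ofReal_one, one_mul] at h1

theorem norm_sub_le_of_norm_deriv_le {n : ℕ} {u : ℝ → EuclideanSpace ℝ (Fin n)}
    (hu : Differentiable ℝ u) {Λ : ℝ} (h : ∀ x, ‖deriv u x‖ ≤ Λ) (x y : ℝ) :
    ‖u x - u y‖ ≤ Λ * |x - y| :=
  Convex.norm_image_sub_le_of_norm_deriv_le (fun z _ => hu z) (fun z _ => h z) convex_univ
    (mem_univ y) (mem_univ x)

namespace IsTPCurve

variable {n : ℕ} {q lam Λ B : ℝ} {u : ℝ → EuclideanSpace ℝ (Fin n)}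

theorem continuous_deriv (hu : IsTPCurve q lam Λ B u) : Continuous (deriv u) :=
  hu.contDiff.continuous_deriv le_rfl

theorem differentiable (hu : IsTPCurve q lam Λ B u) : Differentiable ℝ u :=
  hu.contDiff.differentiable one_ne_zero

theorem norm_sub_le (hu : IsTPCurve q lam Λ B u) (x y : ℝ) : ‖u x - u y‖ ≤ Λ * |x - y| :=
  norm_sub_le_of_norm_deriv_le hu.differentiable hu.norm_deriv_le x y

theorem periodic_deriv (hu : IsTPCurve q lam Λ B u) : Function.Periodic (deriv u) 1 := by
  intro x
  rw [← deriv_comp_add_const, funext hu.periodic]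

theorem deriv_ne_zero (hu : IsTPCurve q lam Λ B u) (hlam : 0 < lam) (x : ℝ) : deriv u x ≠ 0 :=
  norm_pos_iff.1 (hlam.trans_le (hu.le_norm_deriv x))

theorem measurable_tpRatio (hu : IsTPCurve q lam Λ B u) : Measurable (tpRatio u) := by
  have h1 := hu.continuous_deriv
  have h2 := hu.contDiff.continuous
  unfold tpRatio wedgeSq
  refine Measurable.div (Continuous.measurable ?_) (Continuous.measurable ?_) <;> fun_prop

theorem abs_direction_sub_le (hu : IsTPCurve q lam Λ B u) (hlam : 0 < lam)
    {e : EuclideanSpace ℝ (Fin n)} (he : ‖e‖ = 1) {s t : ℝ} (hst : u s ≠ u t) :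
    |⟪deriv u s, e⟫ ^ 2 / ‖deriv u s‖ ^ 2 - ⟪deriv u t, e⟫ ^ 2 / ‖deriv u t‖ ^ 2| ≤
      2 * Λ / lam * |s - t| * (tpRatio u (s, t) + tpRatio u (t, s)) := by
  have aux : ∀ s t : ℝ, u s ≠ u t →
      |⟪deriv u t, e⟫ ^ 2 / ‖deriv u t‖ ^ 2 - ⟪u s - u t, e⟫ ^ 2 / ‖u s - u t‖ ^ 2| ≤
        2 * Λ / lam * |s - t| * tpRatio u (s, t) := by
    intro s t hst
    have hw : 0 < ‖u s - u t‖ := norm_pos_iff.2 (sub_ne_zero.2 hst)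
    have ha : 0 < ‖deriv u t‖ := norm_pos_iff.2 (hu.deriv_ne_zero hlam t)
    have hr := tpRatio_nonneg u (s, t)
    refine (abs_sq_inner_div_sub_le (hu.deriv_ne_zero hlam t) (sub_ne_zero.2 hst) he).trans ?_
    calc _ = 2 * (‖u s - u t‖ / ‖deriv u t‖) * tpRatio u (s, t) := by
          simp only [tpRatio]; field_simp
      _ ≤ 2 * ((Λ * |s - t|) / lam) * tpRatio u (s, t) := by
          gcongr
          · exact hw.le.trans (hu.norm_sub_le s t)
          · exact hu.norm_sub_le s t
          · exact hu.le_norm_deriv t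
      _ = _ := by ring
  have h1 := aux s t hst
  have h2 := aux t s hst.symm
  rw [← neg_sub (u s), inner_neg_left, neg_sq, norm_neg, abs_sub_comm t s] at h2
  rw [abs_sub_comm] at h1
  have h3 := abs_sub_le (⟪deriv u s, e⟫ ^ 2 / ‖deriv u s‖ ^ 2)
    (⟪u s - u t, e⟫ ^ 2 / ‖u s - u t‖ ^ 2) (⟪deriv u t, e⟫ ^ 2 / ‖deriv u t‖ ^ 2)
  linarith

end IsTPCurve

/-- The tangent line of `u` turns little over parameter distances at most `δ`. -/
def DirectionModulus {n : ℕ} (u : ℝ → EuclideanSpace ℝ (Fin n)) (δ : ℝ) : Prop :=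
  ∀ e : EuclideanSpace ℝ (Fin n), ‖e‖ = 1 → ∀ x y : ℝ, |x - y| ≤ δ →
    |⟪deriv u x, e⟫ ^ 2 / ‖deriv u x‖ ^ 2 - ⟪deriv u y, e⟫ ^ 2 / ‖deriv u y‖ ^ 2| ≤ 1 / 4

theorem exists_direction_modulus (n : ℕ) {q lam Λ B : ℝ} (hq : 2 < q) (hlam : 0 < lam)
    (hΛ : 0 < Λ) (hB : 0 < B) :
    ∃ δ : ℝ, 0 < δ ∧ δ ≤ 1 / 4 ∧ ∀ u : ℝ → EuclideanSpace ℝ (Fin n), IsTPCurve q lam Λ B u →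
      DirectionModulus u δ := by
  have hα : 0 < 1 - 2 / q := by rw [sub_pos, div_lt_one (by linarith)]; exact hq
  set C := 4 * (4 * (2 * Λ / lam) * (1 + B) / (1 - 2⁻¹ ^ (1 - 2 / q)))
  have hlim : Tendsto (fun r : ℝ => C * |r| ^ (1 - 2 / q)) (𝓝 0) (𝓝 0) := by
    have : ContinuousAt (fun r : ℝ => C * |r| ^ (1 - 2 / q)) 0 :=
      continuousAt_const.mul (continuous_abs.continuousAt.rpow_const (Or.inr hα.le))
    simpa [ContinuousAt, Real.zero_rpow hα.ne'] using this
  obtain ⟨ε, hε, hε'⟩ := Metric.eventually_nhds_iff.1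
    (hlim.eventually (Iic_mem_nhds (show (0 : ℝ) < 1 / 4 by norm_num)))
  refine ⟨min (ε / 2) (1 / 4), by positivity, min_le_right _ _, fun u hu e he x y hxy => ?_⟩
  have hxy1 : |x - y| ≤ ε / 2 := hxy.trans (min_le_left _ _)
  have hxy2 : |x - y| ≤ 1 / 4 := hxy.trans (min_le_right _ _)
  have hcont : Continuous fun x => ⟪deriv u x, e⟫ ^ 2 / ‖deriv u x‖ ^ 2 := by
    have := hu.continuous_deriv
    refine Continuous.div (by fun_prop) (by fun_prop) fun x => ?_
    exact pow_ne_zero 2 (norm_ne_zero_iff.2 (hu.deriv_ne_zero hlam x))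
  refine (abs_sub_le_of_lintegral_le hcont hu.measurable_tpRatio (tpRatio_nonneg u) hq
    (by positivity) hB.le (fun x => by simp only [hu.periodic_deriv x]) (fun s hs t ht hst => ?_)
    hu.lintegral_le (by linarith)).trans
    (hε' (by rw [Real.dist_eq, sub_zero]; linarith : dist (x - y) 0 < ε))
  refine hu.abs_direction_sub_le hlam he fun h => hst ?_
  obtain ⟨m, hm⟩ := hu.embedded.exists_int h
  have h1 : (m : ℝ) < 1 := by linarith [hs.2, ht.1]
  have h2 : (-1 : ℝ) < m := by linarith [hs.1, ht.2]
  have : m = 0 := by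
    have : m < 1 := by exact_mod_cast h1
    have : -1 < m := by exact_mod_cast h2
    omega
  rw [this, Int.cast_zero] at hm
  linarith

namespace IsTPCurve

variable {n : ℕ} {q lam Λ B δ : ℝ} {u : ℝ → EuclideanSpace ℝ (Fin n)}

theorem le_inner_deriv (hu : IsTPCurve q lam Λ B u) (hlam : 0 < lam)
    (hδ : DirectionModulus u δ)
    {x y : ℝ} (hxy : |x - y| ≤ δ) : lam / 2 * ‖deriv u y‖ ≤ ⟪deriv u x, deriv u y⟫ := by
  set a := deriv u y
  have ha : 0 < ‖a‖ := norm_pos_iff.2 (hu.deriv_ne_zero hlam y)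
  have hsq : ∀ z, |z - y| ≤ δ → 3 / 4 * (‖deriv u z‖ * ‖a‖) ^ 2 ≤ ⟪deriv u z, a⟫ ^ 2 := by
    intro z hz
    have hz0 : 0 < ‖deriv u z‖ := norm_pos_iff.2 (hu.deriv_ne_zero hlam z)
    have h := hδ (‖a‖⁻¹ • a) (norm_smul_inv_norm (norm_pos_iff.1 ha)) z y hz
    have e1 : ⟪a, ‖a‖⁻¹ • a⟫ ^ 2 / ‖a‖ ^ 2 = 1 := by
      rw [real_inner_smul_right, real_inner_self_eq_norm_sq]; field_simp
    have e2 : ⟪deriv u z, ‖a‖⁻¹ • a⟫ ^ 2 / ‖deriv u z‖ ^ 2 =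
        ⟪deriv u z, a⟫ ^ 2 / (‖deriv u z‖ * ‖a‖) ^ 2 := by
      rw [real_inner_smul_right]; field_simp
    change |_ - ⟪a, ‖a‖⁻¹ • a⟫ ^ 2 / ‖a‖ ^ 2| ≤ _ at h
    rw [e1, e2] at h
    rw [← le_div_iff₀ (by positivity)]
    linarith [(abs_le.1 h).1]
  have hne : ∀ z, |z - y| ≤ δ → ⟪deriv u z, a⟫ ≠ 0 := by
    intro z hz h0
    have h1 := hsq z hz
    have hz0 : 0 < ‖deriv u z‖ := norm_pos_iff.2 (hu.deriv_ne_zero hlam z)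
    have : 0 < 3 / 4 * (‖deriv u z‖ * ‖a‖) ^ 2 := by positivity
    rw [h0] at h1
    linarith
  have hpos : 0 ≤ ⟪deriv u x, a⟫ := by
    by_contra! hneg
    have hc : Continuous fun z => ⟪deriv u z, a⟫ := hu.continuous_deriv.inner continuous_const
    have h0 : (0 : ℝ) ∈ uIcc ⟪deriv u y, a⟫ ⟪deriv u x, a⟫ :=
      mem_uIcc.2 (Or.inr ⟨hneg.le, real_inner_self_nonneg⟩)
    obtain ⟨z, hz, hz0⟩ := intermediate_value_uIcc hc.continuousOn h0
    exact hne z ((abs_sub_left_of_mem_uIcc hz).trans hxy) hz0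
  have h1 := hsq x hxy
  have h2 := hu.le_norm_deriv x
  have h3 : (lam / 2 * ‖a‖) ^ 2 ≤ ⟪deriv u x, a⟫ ^ 2 := by
    refine le_trans ?_ h1
    have : (lam * ‖a‖) ^ 2 ≤ (‖deriv u x‖ * ‖a‖) ^ 2 := by gcongr
    nlinarith [sq_nonneg (lam * ‖a‖)]
  exact (sq_le_sq₀ (by positivity) hpos).1 h3

theorem le_norm_sub_of_abs_sub_le (hu : IsTPCurve q lam Λ B u) (hlam : 0 < lam)
    (hδ : DirectionModulus u δ)
    {x y : ℝ} (hxy : |x - y| ≤ δ) : lam / 2 * |x - y| ≤ ‖u x - u y‖ := by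
  wlog hle : y ≤ x generalizing x y
  · rw [abs_sub_comm, norm_sub_rev]
    exact this (by rwa [abs_sub_comm]) (le_of_not_ge hle)
  rw [abs_of_nonneg (sub_nonneg.2 hle)] at hxy ⊢
  set a := deriv u y
  have ha : 0 < ‖a‖ := norm_pos_iff.2 (hu.deriv_ne_zero hlam y)
  have hd : ∀ z, HasDerivAt (fun z => ⟪u z, a⟫) ⟪deriv u z, a⟫ z := fun z => by
    simpa using (hu.differentiable z).hasDerivAt.inner ℝ (hasDerivAt_const z a)
  have h := (convex_Icc y x).mul_sub_le_image_sub_of_le_deriv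
    (f := fun z => ⟪u z, a⟫) (fun z _ => (hd z).continuousAt.continuousWithinAt)
    (fun z _ => (hd z).differentiableAt.differentiableWithinAt) (C := lam / 2 * ‖a‖)
    (fun z hz => by
      rw [interior_Icc] at hz
      rw [(hd z).deriv]
      exact hu.le_inner_deriv hlam hδ (by rw [abs_of_pos (sub_pos.2 hz.1)]; linarith [hz.2]))
    y (left_mem_Icc.2 hle) x (right_mem_Icc.2 hle) hle
  rw [← inner_sub_left] at h
  have h1 := real_inner_le_norm (u x - u y) a
  refine le_of_mul_le_mul_right ?_ ha
  linarith

end IsTPCurve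

theorem exists_Ioc_subset_near {x h : ℝ} (hx : x ∈ Icc (0 : ℝ) 1) (hh : h ≤ 1 / 2) :
    ∃ c, Ioc c (c + h) ⊆ Ioc 0 1 ∧ ∀ s ∈ Ioc c (c + h), |s - x| ≤ h := by
  rcases le_or_gt x (1 / 2) with h1 | h1
  · refine ⟨x, fun s hs => ⟨hx.1.trans_lt hs.1, by linarith [hs.2]⟩, fun s hs => ?_⟩
    rw [abs_le]; constructor <;> linarith [hs.1, hs.2]
  · refine ⟨x - h, fun s hs => ⟨by linarith [hs.1], by linarith [hs.2, hx.2]⟩, fun s hs => ?_⟩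
    rw [abs_le]; constructor <;> linarith [hs.1, hs.2]

namespace IsTPCurve

variable {n : ℕ} {q lam Λ B δ : ℝ} {u : ℝ → EuclideanSpace ℝ (Fin n)}

theorem le_tpRatio_near (hu : IsTPCurve q lam Λ B u) (hlam : 0 < lam) (hΛ : 0 < Λ)
    (hδ : DirectionModulus u δ)
    {x y s t : ℝ} (hxy : u x ≠ u y) (hperp : ⟪deriv u y, u x - u y⟫ = 0)
    (hs : |s - x| ≤ ‖u x - u y‖ / (16 * Λ)) (ht : |t - y| ≤ ‖u x - u y‖ / (16 * Λ))
    (htδ : |t - y| ≤ δ) : lam / (4 * ‖u x - u y‖) ≤ tpRatio u (s, t) := by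
  set w₀ := u x - u y
  set w := u s - u t
  set a := deriv u t
  have hd : 0 < ‖w₀‖ := norm_pos_iff.2 (sub_ne_zero.2 hxy)
  have ha : 0 < ‖a‖ := norm_pos_iff.2 (hu.deriv_ne_zero hlam t)
  have hww : ‖w - w₀‖ ≤ ‖w₀‖ / 8 := by
    have h1 := hu.norm_sub_le s x
    have h2 := hu.norm_sub_le t y
    have h3 : ‖w - w₀‖ ≤ ‖u s - u x‖ + ‖u t - u y‖ := by
      rw [show w - w₀ = (u s - u x) - (u t - u y) by simp only [w, w₀]; abel]
      exact _root_.norm_sub_le _ _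
    have h4 := mul_le_mul_of_nonneg_left hs hΛ.le
    have h5 := mul_le_mul_of_nonneg_left ht hΛ.le
    have h6 : Λ * (‖w₀‖ / (16 * Λ)) = ‖w₀‖ / 16 := by field_simp
    linarith
  have hw1 : ‖w‖ ≤ 9 / 8 * ‖w₀‖ := by
    have : ‖w‖ ≤ ‖w₀‖ + ‖w₀ - w‖ := norm_le_norm_add_norm_sub w₀ w
    rw [norm_sub_rev w₀ w] at this
    linarith
  have hw2 : 7 / 8 * ‖w₀‖ ≤ ‖w‖ := by
    have : ‖w₀‖ ≤ ‖w‖ + ‖w₀ - w‖ := norm_le_norm_add_norm_sub' w₀ w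
    rw [norm_sub_rev w₀ w] at this
    linarith
  have hin0 : |⟪a, w₀⟫| ≤ ‖a‖ * ‖w₀‖ / 2 := by
    have h := hδ (‖w₀‖⁻¹ • w₀) (norm_smul_inv_norm (norm_pos_iff.1 hd)) t y htδ
    have e1 : ⟪deriv u y, ‖w₀‖⁻¹ • w₀⟫ = 0 := by
      rw [real_inner_smul_right, hperp, mul_zero]
    have e2 : ⟪a, ‖w₀‖⁻¹ • w₀⟫ ^ 2 / ‖a‖ ^ 2 = ⟪a, w₀⟫ ^ 2 / (‖a‖ * ‖w₀‖) ^ 2 := by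
      rw [real_inner_smul_right]; field_simp
    change |⟪a, ‖w₀‖⁻¹ • w₀⟫ ^ 2 / ‖a‖ ^ 2 - _| ≤ _ at h
    rw [e1, e2] at h
    have h1 := (abs_le.1 h).2
    rw [zero_pow two_ne_zero, zero_div, sub_zero, div_le_iff₀ (by positivity)] at h1
    refine abs_le_of_sq_le_sq ?_ (by positivity)
    linarith
  have hin : |⟪a, w⟫| ≤ 5 / 8 * (‖a‖ * ‖w₀‖) := by
    have h1 : ⟪a, w⟫ = ⟪a, w₀⟫ + ⟪a, w - w₀⟫ := by rw [← inner_add_right]; congr 1; abel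
    have h2 := (abs_real_inner_le_norm a (w - w₀)).trans
      (mul_le_mul_of_nonneg_left hww ha.le)
    rw [h1]
    linarith [abs_add_le ⟪a, w₀⟫ ⟪a, w - w₀⟫]
  have hwedge : (lam * ‖w₀‖ / 2) ^ 2 ≤ wedgeSq a w := by
    have h1 : ⟪a, w⟫ ^ 2 ≤ (5 / 8 * (‖a‖ * ‖w₀‖)) ^ 2 := by
      rw [← sq_abs]; gcongr
    have h2 : (7 / 8 * ‖w₀‖) ^ 2 ≤ ‖w‖ ^ 2 := by gcongr
    have h3 : (lam * ‖w₀‖) ^ 2 ≤ (‖a‖ * ‖w₀‖) ^ 2 := by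
      gcongr; exact hu.le_norm_deriv t
    have h4 := mul_le_mul_of_nonneg_left h2 (sq_nonneg ‖a‖)
    unfold wedgeSq
    nlinarith [sq_nonneg (‖a‖ * ‖w₀‖)]
  have hsqrt : lam * ‖w₀‖ / 2 ≤ √(wedgeSq a w) := Real.le_sqrt_of_sq_le hwedge
  have hw3 : 0 < ‖w‖ := lt_of_lt_of_le (by positivity) hw2
  change _ ≤ √(wedgeSq a w) / ‖w‖ ^ 2
  calc lam / (4 * ‖w₀‖) = (lam * ‖w₀‖ / 2) / (2 * ‖w₀‖ ^ 2) := by field_simp; ring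
    _ ≤ √(wedgeSq a w) / ‖w‖ ^ 2 := by
      gcongr
      have : ‖w‖ ^ 2 ≤ (9 / 8 * ‖w₀‖) ^ 2 := by gcongr
      nlinarith [sq_nonneg ‖w₀‖]

theorem rpow_mul_le_of_inner_eq_zero (hu : IsTPCurve q lam Λ B u) (hq : 0 < q) (hlam : 0 < lam)
    (hΛ : 0 < Λ) (hB : 0 < B) (hδ' : δ ≤ 1 / 2)
    (hδ : DirectionModulus u δ)
    {x y : ℝ} (hxy : u x ≠ u y) (hperp : ⟪deriv u y, u x - u y⟫ = 0)
    (hd : ‖u x - u y‖ / (16 * Λ) ≤ δ) :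
    (lam / (4 * ‖u x - u y‖)) ^ q * (‖u x - u y‖ / (16 * Λ)) ^ 2 ≤ B := by
  wlog hmem : x ∈ Icc (0 : ℝ) 1 ∧ y ∈ Icc (0 : ℝ) 1 generalizing x y
  · have e1 : ∀ z, u (Int.fract z) = u z := fun z => by
      rw [← Int.self_sub_floor]; simpa using hu.periodic.sub_int_mul_eq (x := z) ⌊z⌋
    have e2 : ∀ z, deriv u (Int.fract z) = deriv u z := fun z => by
      rw [← Int.self_sub_floor]; simpa using hu.periodic_deriv.sub_int_mul_eq (x := z) ⌊z⌋
    have := @this (Int.fract x) (Int.fract y)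
    simp only [e1, e2] at this
    exact this hxy hperp hd ⟨⟨Int.fract_nonneg x, (Int.fract_lt_one x).le⟩,
      ⟨Int.fract_nonneg y, (Int.fract_lt_one y).le⟩⟩
  set d := ‖u x - u y‖ with hd_def
  have hd0 : 0 < d := norm_pos_iff.2 (sub_ne_zero.2 hxy)
  set h := d / (16 * Λ) with hh
  have hh0 : 0 < h := by positivity
  obtain ⟨c, hc, hc'⟩ := exists_Ioc_subset_near hmem.1 (hd.trans hδ')
  obtain ⟨c₂, hc₂, hc₂'⟩ := exists_Ioc_subset_near hmem.2 (hd.trans hδ')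
  have hvol : (volume : Measure (ℝ × ℝ)) (Ioc c (c + h) ×ˢ Ioc c₂ (c₂ + h)) =
      ENNReal.ofReal (h ^ 2) := by
    rw [Measure.volume_eq_prod, Measure.prod_prod, Real.volume_Ioc, Real.volume_Ioc,
      add_sub_cancel_left, add_sub_cancel_left, ← ENNReal.ofReal_mul hh0.le, sq]
  rw [← ENNReal.ofReal_le_ofReal_iff hB.le, ENNReal.ofReal_mul (by positivity), ← hvol,
    ← setLIntegral_const]
  refine le_trans ?_ ((lintegral_mono_set (prod_mono hc hc₂)).trans hu.lintegral_le)
  refine setLIntegral_mono' (measurableSet_Ioc.prod measurableSet_Ioc) ?_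
  rintro ⟨s, t⟩ ⟨hs, ht⟩
  refine ENNReal.ofReal_le_ofReal (Real.rpow_le_rpow (by positivity) ?_ hq.le)
  exact hu.le_tpRatio_near hlam hΛ hδ hxy hperp (hc' s hs) (hc₂' t ht) ((hc₂' t ht).trans hd)

theorem le_norm_sub_of_inner_eq_zero (hu : IsTPCurve q lam Λ B u) (hq : 2 < q) (hlam : 0 < lam)
    (hΛ : 0 < Λ) (hB : 0 < B) (hδ' : δ ≤ 1 / 2)
    (hδ : DirectionModulus u δ)
    {x y : ℝ} (hxy : u x ≠ u y) (hperp : ⟪deriv u y, u x - u y⟫ = 0) :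
    min (16 * Λ * δ) (((lam / 4) ^ q / ((16 * Λ) ^ 2 * B)) ^ (1 / (q - 2))) ≤ ‖u x - u y‖ := by
  rcases le_or_gt (‖u x - u y‖ / (16 * Λ)) δ with hd | hd
  · refine (min_le_right _ _).trans ?_
    have h := hu.rpow_mul_le_of_inner_eq_zero (by linarith) hlam hΛ hB hδ' hδ hxy hperp hd
    have hd0 : 0 < ‖u x - u y‖ := norm_pos_iff.2 (sub_ne_zero.2 hxy)
    set d := ‖u x - u y‖
    have hpow : (lam / 4) ^ q / ((16 * Λ) ^ 2 * B) ≤ d ^ (q - 2) := by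
      rw [← div_div, Real.div_rpow (by positivity) hd0.le, div_pow, div_mul_div_comm,
        div_le_iff₀ (by positivity)] at h
      rw [Real.rpow_sub hd0, Real.rpow_two, div_le_div_iff₀ (by positivity) (by positivity)]
      linarith
    calc _ ≤ (d ^ (q - 2)) ^ (1 / (q - 2)) :=
          Real.rpow_le_rpow (by positivity) hpow (by rw [one_div_nonneg]; linarith)
      _ = d := by
        rw [← Real.rpow_mul hd0.le, mul_one_div_cancel (by linarith), Real.rpow_one]
  · refine (min_le_left _ _).trans ?_
    rw [lt_div_iff₀ (by positivity)] at hd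
    linarith

theorem le_norm_sub_of_le_circDist (hu : IsTPCurve q lam Λ B u) (hlam : 0 < lam) (hδ0 : 0 < δ)
    (hδ : DirectionModulus u δ)
    {ε : ℝ} (hε : ∀ x y, u x ≠ u y → ⟪deriv u y, u x - u y⟫ = 0 → ε ≤ ‖u x - u y‖)
    {x y : ℝ} (hxy : δ ≤ circDist x y) : min (lam / 2 * δ) ε ≤ ‖u x - u y‖ := by
  have hfr : u (x + Int.fract (y - x)) = u y := by
    rw [Int.fract, show x + (y - x - ⌊y - x⌋) = y - ⌊y - x⌋ by ring]
    simpa using hu.periodic.sub_int_mul_eq (x := y) ⌊y - x⌋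
  have hf0 := Int.fract_nonneg (y - x)
  have hf1 := Int.fract_lt_one (y - x)
  have hf2 := Int.fract_add_floor (y - x)
  have hf : x + Int.fract (y - x) ∈ Icc (x + δ) (x + 1 - δ) := by
    have h1 := circDist_le (x := x) (y := y) (-⌊y - x⌋)
    have h2 := circDist_le (x := x) (y := y) (-⌊y - x⌋ - 1)
    push_cast at h1 h2
    rw [show x - y - -(⌊y - x⌋ : ℝ) = -Int.fract (y - x) by linarith, abs_neg,
      abs_of_nonneg hf0] at h1
    rw [show x - y - (-(⌊y - x⌋ : ℝ) - 1) = 1 - Int.fract (y - x) by linarith,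
      abs_of_pos (by linarith)] at h2
    constructor <;> linarith
  have hc : Continuous fun z => ‖u x - u z‖ :=
    (continuous_const.sub hu.contDiff.continuous).norm
  obtain ⟨z, hz, hmin⟩ := isCompact_Icc.exists_isMinOn ⟨_, hf⟩ hc.continuousOn
  have hzy : ‖u x - u z‖ ≤ ‖u x - u y‖ := by
    rw [← hfr]; exact hmin hf
  refine le_trans ?_ hzy
  rcases hz.1.eq_or_lt with h1 | h1
  · have := hu.le_norm_sub_of_abs_sub_le hlam hδ (x := x) (y := z)
      (by rw [← h1]; simp [abs_of_pos hδ0])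
    rw [← h1] at this ⊢
    refine (min_le_left _ _).trans ?_
    simpa [abs_of_pos hδ0] using this
  rcases hz.2.eq_or_lt with h2 | h2
  · have := hu.le_norm_sub_of_abs_sub_le hlam hδ (x := x) (y := x - δ)
      (by simp [abs_of_pos hδ0])
    have hp : u z = u (x - δ) := by
      rw [h2, show x + 1 - δ = x - δ + 1 by ring, hu.periodic]
    rw [hp]
    refine (min_le_left _ _).trans ?_
    simpa [abs_of_pos hδ0] using this
  refine (min_le_right _ _).trans (hε x z (fun h => ?_) ?_)
  · obtain ⟨m, hm⟩ := hu.embedded.exists_int h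
    have h3 : (m : ℝ) < 0 := by linarith
    have h4 : (-1 : ℝ) < m := by linarith
    have : m < 0 := by exact_mod_cast h3
    have : -1 < m := by exact_mod_cast h4
    omega
  · have hloc : IsLocalMin (fun z => ‖u x - u z‖ ^ 2) z := by
      filter_upwards [Icc_mem_nhds h1 h2] with w hw
      have := hmin hw
      simp only [mem_ofPred_eq] at this
      gcongr
    have hder := ((hu.differentiable z).hasDerivAt.const_sub (u x)).norm_sq
    have := hloc.hasDerivAt_eq_zero hder
    rw [inner_neg_right, real_inner_comm] at this
    linarith

end IsTPCurve

theorem exists_forall_mul_circDist_le (n : ℕ) {q lam Λ B : ℝ} (hq : 2 < q) (hlam : 0 < lam)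
    (hΛ : 0 < Λ) (hB : 0 < B) :
    ∃ c : ℝ, 0 < c ∧ ∀ u : ℝ → EuclideanSpace ℝ (Fin n), IsTPCurve q lam Λ B u →
      ∀ x y, c * circDist x y ≤ ‖u x - u y‖ := by
  obtain ⟨δ, hδ0, hδ4, hδ⟩ := exists_direction_modulus n hq hlam hΛ hB
  set ε := min (16 * Λ * δ) (((lam / 4) ^ q / ((16 * Λ) ^ 2 * B)) ^ (1 / (q - 2)))
  have hε : 0 < ε := lt_min (by positivity) (by positivity)
  refine ⟨min (lam / 2) (min (lam / 2 * δ) ε), by positivity, fun u hu x y => ?_⟩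
  have h0 : 0 ≤ circDist x y := norm_nonneg _
  rcases le_total (circDist x y) δ with h | h
  · obtain ⟨m, hm⟩ := exists_int_abs_sub_eq_circDist x y
    have hp : u (y + m) = u y := by simpa using hu.periodic.int_mul m y
    have := hu.le_norm_sub_of_abs_sub_le hlam (hδ u hu) (hm.trans_le h)
    rw [hp, hm] at this
    exact (mul_le_mul_of_nonneg_right (min_le_left _ _) h0).trans this
  · have := hu.le_norm_sub_of_le_circDist hlam hδ0 (hδ u hu) (ε := ε) (fun x y hxy hperp =>
      hu.le_norm_sub_of_inner_eq_zero hq hlam hΛ hB (by linarith) (hδ u hu) hxy hperp) h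
    refine le_trans ?_ ((min_le_right (lam / 2) _).trans this)
    exact mul_le_of_le_one_right (by positivity) ((circDist_le_half x y).trans (by norm_num))

theorem bil_lt_top {n : ℕ} {u : ℝ → EuclideanSpace ℝ (Fin n)} {c : ℝ} (hc : 0 < c)
    (h : ∀ x y, c * circDist x y ≤ ‖u x - u y‖) : bil u < ⊤ := by
  refine lt_of_le_of_lt ?_ (ENNReal.ofReal_lt_top (r := c⁻¹))
  refine iSup_le fun x => iSup_le fun y => iSup_le fun hxy => ?_
  have h0 : 0 < circDist x y := (norm_nonneg _).lt_of_ne' hxy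
  have h1 : 0 < ‖u x - u y‖ := lt_of_lt_of_le (by positivity) (h x y)
  rw [← ENNReal.ofReal_div_of_pos h1]
  refine ENNReal.ofReal_le_ofReal ?_
  rw [div_le_iff₀ h1, inv_mul_eq_div, le_div_iff₀ hc]
  linarith [h x y]

theorem bil_le_two_mul_bil {n : ℕ} {u v : ℝ → EuclideanSpace ℝ (Fin n)} {c : ℝ} (hc : 0 < c)
    (h : ∀ x y, c * circDist x y ≤ ‖u x - u y‖)
    (huv : ∀ x y, ‖(v x - u x) - (v y - u y)‖ ≤ c / 2 * circDist x y) : bil v ≤ 2 * bil u := by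
  refine iSup_le fun x => iSup_le fun y => iSup_le fun hxy => ?_
  have h0 : 0 < circDist x y := (norm_nonneg _).lt_of_ne' hxy
  have h1 : 0 < ‖u x - u y‖ := lt_of_lt_of_le (by positivity) (h x y)
  have h2 : ‖u x - u y‖ / 2 ≤ ‖v x - v y‖ := by
    have := norm_le_norm_add_norm_sub (v x - v y) (u x - u y)
    rw [sub_sub_sub_comm] at this
    linarith [h x y, huv x y]
  have h3 : 0 < ‖v x - v y‖ := lt_of_lt_of_le (by positivity) h2
  have h4 : ENNReal.ofReal (circDist x y) / ENNReal.ofReal ‖u x - u y‖ ≤ bil u :=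
    le_iSup_of_le x (le_iSup_of_le y (le_iSup_of_le hxy le_rfl))
  refine le_trans ?_ (mul_le_mul_right h4 2)
  rw [← ENNReal.ofReal_div_of_pos h1, ← ENNReal.ofReal_div_of_pos h3, two_mul,
    ← ENNReal.ofReal_add (by positivity) (by positivity), ← two_mul]
  refine ENNReal.ofReal_le_ofReal ?_
  calc _ ≤ circDist x y / (‖u x - u y‖ / 2) := by gcongr
    _ = _ := by field_simp

/-- Corollary 3.8, uniform bi-Lipschitz radius: there is a radius
`R = R(lam, Λ, M, n, q) > 0` such that for every embedded regular curve `u` with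
`lam ≤ |u'| ≤ Λ` and `TP(u) ≤ M` and every `C¹` curve `ũ` with
`‖(ũ - u)'‖_{L^∞} ≤ R` one has `bil(ũ) ≤ 2 bil(u) < ∞`. -/
theorem uniform_biLipschitz_radius (n : ℕ) (q lam Λ M : ℝ) (hq : 2 < q)
    (hlam : 0 < lam) (hΛ : 0 < Λ) (hM : 0 < M) :
    ∃ R : ℝ, 0 < R ∧ ∀ u v : ℝ → EuclideanSpace ℝ (Fin n),
      ContDiff ℝ 1 u → Function.Periodic u 1 → Embedded u →
      sobSemPow (1 - 1 / q) q (deriv u) < ⊤ →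
      (∀ x, lam ≤ ‖deriv u x‖) → (∀ x, ‖deriv u x‖ ≤ Λ) →
      TPe q u ≤ ENNReal.ofReal M →
      ContDiff ℝ 1 v → Function.Periodic v 1 →
      (∀ x, ‖deriv (fun t => v t - u t) x‖ ≤ R) →
      bil v ≤ 2 * bil u ∧ bil u < ⊤ := by
  obtain ⟨c, hc, hbound⟩ :=
    exists_forall_mul_circDist_le n hq hlam hΛ (mul_pos (by linarith : 0 < q) hM)
  refine ⟨c / 2, by positivity, fun u v hu hper hemb _ hlow hup hTP hv hvper hR => ?_⟩
  have hcurve : IsTPCurve q lam Λ (q * M) u :=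
    ⟨hu, hper, hemb, hlow, hup, lintegral_tpRatio_le (by linarith) hTP⟩
  refine ⟨bil_le_two_mul_bil hc (hbound u hcurve) fun x y => ?_, bil_lt_top hc (hbound u hcurve)⟩
  obtain ⟨m, hm⟩ := exists_int_abs_sub_eq_circDist x y
  have hdiff : Differentiable ℝ fun t => v t - u t :=
    (hv.differentiable one_ne_zero).sub hcurve.differentiable
  have := norm_sub_le_of_norm_deriv_le hdiff hR x (y + m)
  rwa [hm, show v (y + m) = v y by simpa using hvper.int_mul m y,
    show u (y + m) = u y by simpa using hper.int_mul m y] at this
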